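/- Let q be a prime power, r ≥ 2, k ≥ 1 with k < q^{2r-1}, and let f ∈ F_{q^r}[x] be a nonzero polynomial of degree at most k having exactly s distinct roots in F_{q^r}. Then the codeword c = ev(f(x)) of the code C_{q,r,k}, obtained by evaluating the polynomial f(x) at all q^{2r-1} affine F_{q^r}-rational points of the Norm-Trace curve N_{q,r}, has weight w(c) = q^{2r-1} − s·q^{r-1}. -/

import Mathlib

/-!
Let `K` be the subfield of order `q` of `F`, so that the curve is `Algebra.norm K x =
Algebra.trace K F y`. The trace is additive and onto `K`, so each of its fibres is a coset of its
kernel, of size `q ^ (r - 1)`; hence every `x` lies below exactly `q ^ (r - 1)` points of the curve,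
and the `s` roots of `f` account for `s * q ^ (r - 1)` zero coordinates.
-/

open Module Polynomial

section FibreCounting

variable {G H : Type*} [AddGroup G] [AddGroup H] {g : G →+ H}

theorem natCard_ker_mul_natCard_of_surjective (hg : Function.Surjective g) :
    Nat.card g.ker * Nat.card H = Nat.card G := by
  rw [← g.ker.card_mul_index, AddSubgroup.index_ker, AddMonoidHom.range_eq_top.2 hg,
    AddSubgroup.card_top]

theorem natCard_pullback_of_surjective {X : Type*} (hg : Function.Surjective g) (φ : X → H)
    (A : X → Prop) :
    Nat.card {P : X × G // φ P.1 = g P.2 ∧ A P.1} = Nat.card {x // A x} * Nat.card g.ker := by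
  let e : {P : X × G // φ P.1 = g P.2 ∧ A P.1} ≃ Σ x : {x // A x}, g ⁻¹' {φ x} :=
    { toFun P := ⟨⟨P.1.1, P.2.2⟩, P.1.2, P.2.1.symm⟩
      invFun z := ⟨(z.1, z.2), z.2.2.symm, z.1.2⟩ }
  let trivialization : (Σ x : {x // A x}, g ⁻¹' {φ x}) ≃ {x // A x} × g.ker :=
    Equiv.sigmaEquivProdOfEquiv fun x ↦ g.fiberEquivKerOfSurjective hg (φ x)
  rw [Nat.card_congr (e.trans trivialization), Nat.card_prod]

end FibreCounting

section NormTraceCurve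

variable (K L : Type*) [Field K] [Field L] [Algebra K L]

/-- The affine rational points `(x, y)` over `L` of the Norm-Trace curve `N(x) = T(y)`, in terms of
the intrinsic norm and trace of the extension `L / K`; for finite fields `mem_normTraceCurve_iff`
recovers the explicit equation. -/
def normTraceCurve : Set (L × L) :=
  {P | Algebra.norm K P.1 = Algebra.trace K L P.2}

variable {K L} [Finite L]

theorem mem_normTraceCurve_iff {P : L × L} :
    P ∈ normTraceCurve K L ↔
      P.1 ^ ((Nat.card L - 1) / (Nat.card K - 1)) =
        ∑ i ∈ Finset.range (finrank K L), P.2 ^ Nat.card K ^ i := by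
  rw [← FiniteField.algebraMap_norm_eq_pow, ← FiniteField.algebraMap_trace_eq_sum_pow,
    (algebraMap K L).injective.eq_iff, normTraceCurve, Set.mem_ofPred_eq]

variable (K L) in
theorem natCard_ker_trace :
    Nat.card (Algebra.trace K L).toAddMonoidHom.ker = Nat.card K ^ (finrank K L - 1) := by
  have : Finite K := .of_injective _ (algebraMap K L).injective
  have card_mul := natCard_ker_mul_natCard_of_surjective
    (g := (Algebra.trace K L).toAddMonoidHom) (Algebra.trace_surjective K L)
  rw [natCard_eq_pow_finrank (K := K) (V := L), ← pow_sub_one_mul finrank_pos.ne'] at card_mul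
  exact Nat.eq_of_mul_eq_mul_right Nat.card_pos card_mul

theorem natCard_normTraceCurve_over (A : L → Prop) :
    Nat.card {P : L × L // P ∈ normTraceCurve K L ∧ A P.1} =
      Nat.card {x // A x} * Nat.card K ^ (finrank K L - 1) := by
  rw [← natCard_ker_trace]
  exact natCard_pullback_of_surjective (g := (Algebra.trace K L).toAddMonoidHom)
    (Algebra.trace_surjective K L) (Algebra.norm K) A

end NormTraceCurve

theorem natCard_eval_ne_zero {R : Type*} [CommRing R] [IsDomain R] [Fintype R] [DecidableEq R]
    {f : R[X]} (hf : f ≠ 0) :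
    Nat.card {x // f.eval x ≠ 0} = Fintype.card R - f.roots.toFinset.card := by
  rw [← Finset.card_compl]
  exact Nat.subtype_card _ fun x ↦ by simp [hf]

theorem exists_subfield_natCard_eq {F : Type*} [Field F] [Finite F] {q r : ℕ}
    (hF : Nat.card F = q ^ r) : ∃ K : Subfield F, Nat.card K = q := by
  have := Fintype.ofFinite F
  have hr : r ≠ 0 := by
    rintro rfl
    exact Finite.one_lt_card.ne' hF
  have hq : IsPrimePow q := by
    rw [← isPrimePow_pow_iff hr, ← hF, Nat.card_eq_fintype_card]
    exact FiniteField.isPrimePow_card F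
  obtain ⟨p, m, hp, hm, rfl⟩ := (isPrimePow_nat_iff q).1 hq
  have : Fact p.Prime := ⟨hp⟩
  rw [← pow_mul] at hF
  have : CharP F p := charP_of_card_eq_prime_pow (Nat.card_eq_fintype_card.symm.trans hF)
  let := ZMod.algebra F p
  have finrank_eq : finrank (ZMod p) F = m * r := by
    rw [← FiniteField.pow_finrank_eq_natCard p] at hF
    exact Nat.pow_right_injective hp.two_le hF
  obtain ⟨φ⟩ : Nonempty (GaloisField p m →ₐ[ZMod p] F) :=
    FiniteField.nonempty_algHom_of_finrank_dvd <| by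
      rw [GaloisField.finrank p hm.ne', finrank_eq]
      exact dvd_mul_right m r
  refine ⟨φ.toRingHom.fieldRange, ?_⟩
  rw [← GaloisField.card p m hm.ne']
  exact Nat.card_range_of_injective φ.injective

theorem stmt_10_general {F : Type*} [Field F] [Fintype F] [DecidableEq F] {q r : ℕ}
    (hF : Fintype.card F = q ^ r) {f : F[X]} (hf : f ≠ 0) :
    Nat.card {P : F × F // P.1 ^ ((q ^ r - 1) / (q - 1)) =
        ∑ i ∈ Finset.range r, P.2 ^ q ^ i ∧ f.eval P.1 ≠ 0} =
      q ^ (2 * r - 1) - f.roots.toFinset.card * q ^ (r - 1) := by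
  have natCard_F : Nat.card F = q ^ r := Nat.card_eq_fintype_card.trans hF
  obtain ⟨K, rfl⟩ := exists_subfield_natCard_eq natCard_F
  obtain rfl : finrank K F = r :=
    Nat.pow_right_injective Finite.one_lt_card (natCard_eq_pow_finrank.symm.trans natCard_F)
  have count := natCard_normTraceCurve_over (K := K) (f.eval · ≠ 0)
  simp only [mem_normTraceCurve_iff, natCard_F] at count
  have finrank_K_F_pos : 0 < finrank K F := finrank_pos
  rw [count, natCard_eval_ne_zero hf, hF, Nat.sub_mul, ← pow_add]
  congr 2
  lia

/-- The codeword of `C_{q,r,k}` given by evaluating a nonzero polynomial `f(x)` of degree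
at most `k`, having exactly `s` distinct roots in `F_{q^r}`, at the affine
`F_{q^r}`-rational points of the Norm-Trace curve has weight `q^(2r-1) - s·q^(r-1)`. -/
theorem stmt_10 (p m r k : ℕ) (hp : p.Prime) (hm : 0 < m) (hr : 2 ≤ r)
    (q : ℕ) (hq : q = p ^ m) (hk1 : 1 ≤ k) (hk2 : k < q ^ (2 * r - 1))
    (F : Type) [Field F] [Fintype F] [DecidableEq F] (hF : Fintype.card F = q ^ r)
    (f : Polynomial F) (hf : f ≠ 0) (hdeg : f.natDegree ≤ k)
    (s : ℕ) (hs : s = f.roots.toFinset.card) :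
    Nat.card {P : F × F // P.1 ^ ((q ^ r - 1) / (q - 1)) =
        ∑ i ∈ Finset.range r, P.2 ^ q ^ i ∧ f.eval P.1 ≠ 0} =
      q ^ (2 * r - 1) - s * q ^ (r - 1) := by
  rw [hs]
  exact stmt_10_general hF hf
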